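/- Let Z be a p×p real symmetric matrix with spectral decomposition Z = Σ_{i=1}^p λᵢ vᵢvᵢᵀ, where v₁,…,v_p is an orthonormal basis of eigenvectors and λ₁,…,λ_p the corresponding eigenvalues, and let ε ∈ ℝ. Then the matrix Z₊ = Σ_{i=1}^p max(λᵢ, ε) vᵢvᵢᵀ is the unique minimizer of ‖Θ − Z‖_F over all real symmetric matrices Θ such that Θ − εI is positive semidefinite. -/

import Mathlib

open scoped BigOperators

/-- The squared Frobenius norm of a real matrix. -/
noncomputable def frobSq {p : ℕ} (A : Matrix (Fin p) (Fin p) ℝ) : ℝ :=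
  ∑ i, ∑ j, (A i j) ^ 2

/-- The Frobenius norm of a real matrix. -/
noncomputable def frobNorm {p : ℕ} (A : Matrix (Fin p) (Fin p) ℝ) : ℝ :=
  Real.sqrt (frobSq A)

theorem aux_expand {p : ℕ} (A B : Matrix (Fin p) (Fin p) ℝ) :
    frobSq (A + B) = frobSq A + 2 * (∑ a, ∑ b, A a b * B a b) + frobSq B := by
  unfold frobSq
  simp only [Finset.mul_sum, ← Finset.sum_add_distrib, Matrix.add_apply]
  refine Finset.sum_congr rfl fun a _ => Finset.sum_congr rfl fun b _ => ?_
  ring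

theorem aux_zero {p : ℕ} (A : Matrix (Fin p) (Fin p) ℝ) (h : frobSq A ≤ 0) : A = 0 := by
  unfold frobSq at h
  have h0 : ∑ i, ∑ j, (A i j) ^ 2 = 0 :=
    le_antisymm h (Finset.sum_nonneg fun i _ => Finset.sum_nonneg fun j _ => sq_nonneg _)
  ext i j
  have h1 := (Finset.sum_eq_zero_iff_of_nonneg
    (fun i _ => Finset.sum_nonneg fun j _ => sq_nonneg (A i j))).mp h0 i (Finset.mem_univ i)
  have h2 := (Finset.sum_eq_zero_iff_of_nonneg
    (fun j _ => sq_nonneg (A i j))).mp h1 j (Finset.mem_univ j)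
  exact pow_eq_zero_iff (two_ne_zero) |>.mp h2

theorem aux_nonneg {p : ℕ} (A : Matrix (Fin p) (Fin p) ℝ) : 0 ≤ frobSq A :=
  Finset.sum_nonneg fun i _ => Finset.sum_nonneg fun j _ => sq_nonneg _

theorem aux_inner {p : ℕ} (A : Matrix (Fin p) (Fin p) ℝ) (c : Fin p → ℝ)
    (v : Fin p → Fin p → ℝ) :
    ∑ a, ∑ b, A a b * (∑ i, c i • Matrix.vecMulVec (v i) (v i)) a b =
      ∑ i, c i * (v i ⬝ᵥ A.mulVec (v i)) := by
  simp only [Matrix.sum_apply, Matrix.smul_apply, Matrix.vecMulVec_apply, smul_eq_mul,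
    dotProduct, Matrix.mulVec, Finset.mul_sum]
  rw [Finset.sum_comm' (t' := Finset.univ) (s' := fun _ => Finset.univ) (by simp)]
  rw [Finset.sum_congr rfl fun b _ => Finset.sum_comm]
  rw [Finset.sum_comm]
  refine Finset.sum_congr rfl fun i _ => ?_
  rw [Finset.sum_comm]
  refine Finset.sum_congr rfl fun a _ => Finset.sum_congr rfl fun b _ => ?_
  ring

theorem aux_one {p : ℕ} (v : Fin p → Fin p → ℝ)
    (horth : ∀ i j, (∑ k, v i k * v j k) = if i = j then (1 : ℝ) else 0) :
    ∑ i, Matrix.vecMulVec (v i) (v i) = 1 := by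
  have h1 : (Matrix.of v) * (Matrix.of v).transpose = 1 := by
    ext i j
    simp [Matrix.mul_apply, horth, Matrix.one_apply]
  have h2 := mul_eq_one_comm.mp h1
  rw [← h2]
  ext a b
  simp [Matrix.mul_apply, Matrix.sum_apply, Matrix.vecMulVec_apply]

theorem aux_quad {p : ℕ} (v : Fin p → Fin p → ℝ)
    (horth : ∀ i j, (∑ k, v i k * v j k) = if i = j then (1 : ℝ) else 0) (c : Fin p → ℝ)
    (i : Fin p) :
    v i ⬝ᵥ (∑ i, c i • Matrix.vecMulVec (v i) (v i)).mulVec (v i) = c i := by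
  have h : ∀ i j, v i ⬝ᵥ v j = if i = j then (1 : ℝ) else 0 := horth
  simp [Matrix.sum_mulVec, Matrix.smul_mulVec, Matrix.vecMulVec_mulVec, dotProduct_sum,
    dotProduct_smul, h]

theorem aux_key {p : ℕ} (lam : Fin p → ℝ) (v : Fin p → Fin p → ℝ)
    (horth : ∀ i j, (∑ k, v i k * v j k) = if i = j then (1 : ℝ) else 0) (ε : ℝ)
    (T : Matrix (Fin p) (Fin p) ℝ)
    (hT : (T - ε • (1 : Matrix (Fin p) (Fin p) ℝ)).PosSemidef) :
    frobSq (T - ∑ i, max (lam i) ε • Matrix.vecMulVec (v i) (v i)) +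
      frobSq ((∑ i, max (lam i) ε • Matrix.vecMulVec (v i) (v i)) -
        ∑ i, lam i • Matrix.vecMulVec (v i) (v i)) ≤
      frobSq (T - ∑ i, lam i • Matrix.vecMulVec (v i) (v i)) := by
  set P := ∑ i, max (lam i) ε • Matrix.vecMulVec (v i) (v i) with hP
  have hd : P - ∑ i, lam i • Matrix.vecMulVec (v i) (v i) =
      ∑ i, (max (lam i) ε - lam i) • Matrix.vecMulVec (v i) (v i) := by
    simp only [hP, sub_smul, Finset.sum_sub_distrib]
  have he := aux_expand (T - P) (P - ∑ i, lam i • Matrix.vecMulVec (v i) (v i))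
  rw [sub_add_sub_cancel] at he
  rw [he]
  have : 0 ≤ ∑ a, ∑ b, (T - P) a b *
      (P - ∑ i, lam i • Matrix.vecMulVec (v i) (v i)) a b := by
    rw [hd, aux_inner]
    refine Finset.sum_nonneg fun i _ => ?_
    have hq : v i ⬝ᵥ P.mulVec (v i) = max (lam i) ε := aux_quad v horth _ i
    have h1 := hT.dotProduct_mulVec_nonneg (v i)
    have h2 : v i ⬝ᵥ v i = 1 := (horth i i).trans (by simp)
    simp only [star_trivial, Matrix.sub_mulVec, dotProduct_sub, Matrix.smul_mulVec,
      Matrix.one_mulVec, dotProduct_smul, h2, smul_eq_mul, mul_one] at h1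
    rw [Matrix.sub_mulVec, dotProduct_sub, hq]
    rcases le_total (lam i) ε with h | h
    · rw [max_eq_right h]
      exact mul_nonneg (by linarith) h1
    · rw [max_eq_left h]; simp
  linarith

/-- Let `Z` be a `p×p` real symmetric matrix with spectral decomposition
`Z = ∑ᵢ λᵢ vᵢ vᵢᵀ` where the `vᵢ` form an orthonormal basis of eigenvectors, and let
`ε ∈ ℝ`.  Then `Z₊ = ∑ᵢ max(λᵢ, ε) vᵢ vᵢᵀ` is the unique minimizer of `‖Θ - Z‖_F` over
all real symmetric matrices `Θ` with `Θ - εI` positive semidefinite. -/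
theorem stmt_4 {p : ℕ} (hp : 1 ≤ p)
    (Z : Matrix (Fin p) (Fin p) ℝ) (hZ : Z.IsSymm)
    (lam : Fin p → ℝ) (v : Fin p → Fin p → ℝ)
    (horth : ∀ i j, (∑ k, v i k * v j k) = if i = j then (1 : ℝ) else 0)
    (hdecomp : Z = ∑ i, lam i • Matrix.vecMulVec (v i) (v i))
    (ε : ℝ) :
    ((∑ i, max (lam i) ε • Matrix.vecMulVec (v i) (v i)).IsSymm ∧
      ((∑ i, max (lam i) ε • Matrix.vecMulVec (v i) (v i)) -
          ε • (1 : Matrix (Fin p) (Fin p) ℝ)).PosSemidef) ∧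
    (∀ Θ : Matrix (Fin p) (Fin p) ℝ, Θ.IsSymm →
      (Θ - ε • (1 : Matrix (Fin p) (Fin p) ℝ)).PosSemidef →
      frobNorm ((∑ i, max (lam i) ε • Matrix.vecMulVec (v i) (v i)) - Z) ≤
        frobNorm (Θ - Z)) ∧
    (∀ Θ : Matrix (Fin p) (Fin p) ℝ, Θ.IsSymm →
      (Θ - ε • (1 : Matrix (Fin p) (Fin p) ℝ)).PosSemidef →
      frobNorm (Θ - Z) = frobNorm ((∑ i, max (lam i) ε • Matrix.vecMulVec (v i) (v i)) - Z) →
      Θ = ∑ i, max (lam i) ε • Matrix.vecMulVec (v i) (v i)) := by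
  subst hdecomp
  refine ⟨⟨?_, ?_⟩, ?_, ?_⟩
  · rw [Matrix.IsSymm, Matrix.transpose_sum]
    refine Finset.sum_congr rfl fun i _ => ?_
    rw [Matrix.transpose_smul, Matrix.transpose_vecMulVec]
  · rw [← aux_one v horth, Finset.smul_sum, ← Finset.sum_sub_distrib]
    refine Matrix.posSemidef_sum _ fun i _ => ?_
    rw [← sub_smul]
    refine Matrix.PosSemidef.smul ?_ (by simp)
    simpa using Matrix.posSemidef_vecMulVec_self_star (v i)
  · intro T _ hT
    have := aux_key lam v horth ε T hT
    refine Real.sqrt_le_sqrt ?_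
    linarith [aux_nonneg (T - ∑ i, max (lam i) ε • Matrix.vecMulVec (v i) (v i))]
  · intro T _ hT h
    have h1 := aux_key lam v horth ε T hT
    have h2 := (Real.sqrt_inj (aux_nonneg _) (aux_nonneg _)).mp h
    exact sub_eq_zero.mp (aux_zero _ (by linarith))
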